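/- arXiv:2602.19634 — 6 statements merged into one kernel-verified Lean document; each statement's English description precedes it below -/
import Mathlib

section
/- Let n ≥ 1, γ ∈ (0,1), and β_1, …, β_n ∈ ℝ with 0 ≤ β_k ≤ γ for all k and β_n = γ. Then the GSP weights satisfy 0 ≤ w_k ≤ 1 for every k = 1, …, n and ∑_{k=1}^n w_k = 1; that is, (w_1, …, w_n) is a probability vector. -/
/-!
Run policy `k` with discounting read as termination: at each step the process ends with probability
`1 - γ`, switches to policy `k + 1` with probability `γ - β k = γ α k`, and otherwise stays with
probability `β k`. Conditioned on leaving policy `k`, the process switches with probability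
`(γ - β k) / (1 - β k)` and ends with the complementary probability `(1 - γ) / (1 - β k)`.
Hence the GSP weight of `k` is the probability of ending under policy `k`: a stick-breaking weight,
whose partial sums telescope to one minus the probability of surviving every switch. A policy with
`β m = γ` never switches, so that survival probability vanishes.
-/

open Finset

section StickBreaking

variable {R : Type*} [CommRing R]

/-- The stick-breaking weight of index `k` for the ratios `q`: a unit stick is shortened
successively to the fractions `q 0, q 1, …` of its length, and this is the length of the piece
removed at step `k`, counting from `0`. -/
def stickBreakingWeight (q : ℕ → R) (k : ℕ) : R :=
  (1 - q k) * ∏ i ∈ range k, q i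

theorem sum_range_stickBreakingWeight (q : ℕ → R) (n : ℕ) :
    ∑ k ∈ range n, stickBreakingWeight q k = 1 - ∏ i ∈ range n, q i := by
  have weight_eq_sub (k : ℕ) :
      stickBreakingWeight q k = ∏ i ∈ range k, q i - ∏ i ∈ range (k + 1), q i := by
    rw [stickBreakingWeight, prod_range_succ]
    ring
  simp only [weight_eq_sub, sum_range_sub', prod_range_zero]

theorem sum_range_stickBreakingWeight_eq_one {q : ℕ → R} {m n : ℕ} (hmn : m < n)
    (hm : q m = 0) : ∑ k ∈ range n, stickBreakingWeight q k = 1 := by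
  rw [sum_range_stickBreakingWeight, prod_eq_zero (mem_range.mpr hmn) hm, sub_zero]

theorem stickBreakingWeight_mem_Icc [PartialOrder R] [IsOrderedRing R] {q : ℕ → R} {k : ℕ}
    (hq : ∀ i ≤ k, q i ∈ Set.Icc 0 1) : stickBreakingWeight q k ∈ Set.Icc 0 1 := by
  have hq_lt : ∀ i ∈ range k, q i ∈ Set.Icc 0 1 := fun i hi => hq i (mem_range.mp hi).le
  have prod_nonneg : 0 ≤ ∏ i ∈ range k, q i := Finset.prod_nonneg fun i hi => (hq_lt i hi).1
  have prod_le_one : ∏ i ∈ range k, q i ≤ 1 :=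
    Finset.prod_le_one (fun i hi => (hq_lt i hi).1) fun i hi => (hq_lt i hi).2
  obtain ⟨qk_nonneg, qk_le_one⟩ := hq k le_rfl
  exact ⟨mul_nonneg (sub_nonneg.mpr qk_le_one) prod_nonneg,
    mul_le_one₀ (sub_le_self 1 qk_nonneg) prod_nonneg prod_le_one⟩

end StickBreaking

section GSP

variable {K : Type*} [Field K]

/-- The probability that a policy with effective discount `b` is left by switching rather than by
termination, when the process terminates with probability `1 - γ` at each step. -/
def switchBeforeEndProb (γ b : K) : K :=
  (γ - b) / (1 - b)

/-- The GSP weight of policy `k` for the discount `γ` and effective discounts `β`, with policies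
indexed from `0`. -/
def gspWeight (γ : K) (β : ℕ → K) (k : ℕ) : K :=
  (1 - γ) / (1 - β k) * ∏ i ∈ range k, (γ - β i) / (1 - β i)

theorem switchBeforeEndProb_self (γ : K) : switchBeforeEndProb γ γ = 0 := by
  rw [switchBeforeEndProb, sub_self, zero_div]

theorem one_sub_switchBeforeEndProb (γ : K) {b : K} (hb : b ≠ 1) :
    1 - switchBeforeEndProb γ b = (1 - γ) / (1 - b) := by
  rw [switchBeforeEndProb, one_sub_div (sub_ne_zero.mpr hb.symm), sub_sub_sub_cancel_right]

theorem gspWeight_eq_stickBreakingWeight (γ : K) {β : ℕ → K} {k : ℕ} (hk : β k ≠ 1) :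
    gspWeight γ β k = stickBreakingWeight (fun i => switchBeforeEndProb γ (β i)) k := by
  rw [stickBreakingWeight, one_sub_switchBeforeEndProb γ hk]
  rfl

variable [LinearOrder K] [IsStrictOrderedRing K]

theorem switchBeforeEndProb_mem_Icc {γ b : K} (hb : b ≤ γ) (hγ : γ ≤ 1) :
    switchBeforeEndProb γ b ∈ Set.Icc 0 1 := by
  have one_sub_nonneg : 0 ≤ 1 - b := sub_nonneg.mpr (hb.trans hγ)
  exact ⟨div_nonneg (sub_nonneg.mpr hb) one_sub_nonneg,
    div_le_one_of_le₀ (sub_le_sub_right hγ b) one_sub_nonneg⟩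

theorem stmt_2_general {γ : K} {β : ℕ → K} {m n : ℕ} (hγ : γ < 1) (hβ : ∀ k < n, β k ≤ γ)
    (hmn : m < n) (hm : β m = γ) :
    (∀ k < n, 0 ≤ gspWeight γ β k ∧ gspWeight γ β k ≤ 1) ∧
      ∑ k ∈ range n, gspWeight γ β k = 1 := by
  have weight_eq : ∀ k < n, gspWeight γ β k =
      stickBreakingWeight (fun i => switchBeforeEndProb γ (β i)) k := fun k hk =>
    gspWeight_eq_stickBreakingWeight γ ((hβ k hk).trans_lt hγ).ne
  constructor
  · intro k hk
    rw [weight_eq k hk]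
    exact stickBreakingWeight_mem_Icc fun i hi =>
      switchBeforeEndProb_mem_Icc (hβ i (hi.trans_lt hk)) hγ.le
  · rw [sum_congr rfl fun k hk => weight_eq k (mem_range.mp hk)]
    refine sum_range_stickBreakingWeight_eq_one hmn ?_
    rw [hm, switchBeforeEndProb_self]

end GSP

/-- **GSP weights form a probability vector.** For `γ ∈ (0,1)` and reals
`β 0, …, β (n-1)` with `0 ≤ β k ≤ γ` and `β (n-1) = γ` (0-indexed, so the last
effective discount equals `γ`), the GSP weights
`w k = ((1-γ)/(1-β k)) · ∏_{i<k} (γ-β i)/(1-β i)` satisfy `0 ≤ w k ≤ 1` for all `k < n`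
and `∑_{k<n} w k = 1`. -/
theorem stmt_2 (n : ℕ) (hn : 1 ≤ n) (γ : ℝ) (hγ : γ ∈ Set.Ioo (0 : ℝ) 1)
    (β : ℕ → ℝ) (hβ : ∀ k < n, β k ∈ Set.Icc 0 γ) (hβn : β (n - 1) = γ) :
    (∀ k < n,
        0 ≤ ((1 - γ) / (1 - β k)) * ∏ i ∈ Finset.range k, (γ - β i) / (1 - β i) ∧
          ((1 - γ) / (1 - β k)) * ∏ i ∈ Finset.range k, (γ - β i) / (1 - β i) ≤ 1) ∧
      ∑ k ∈ Finset.range n,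
          ((1 - γ) / (1 - β k)) * ∏ i ∈ Finset.range k, (γ - β i) / (1 - β i) = 1 :=
  stmt_2_general hγ.2 (fun k hk => (hβ k hk).2) (Nat.sub_one_lt_of_lt hn) hβn
end

section
/- Let A be a Banach algebra over ℝ, let x ∈ A with ‖x‖ ≤ 1, and let 0 ≤ β ≤ γ < 1. Then the successor operators at the two timescales satisfy M_γ(x) = ((1-γ)/(1-β)) · M_β(x) + ((γ-β)/(1-β)) · M_β(x) · M_γ(x). -/
/-- The successor operator at discount `δ`: `M_δ(x) := (1-δ) · (1 - δ·x)⁻¹ · x`,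
the operator form of the normalized successor measure. -/
noncomputable def succOp {A : Type*} [NormedRing A] [NormedAlgebra ℝ A]
    (δ : ℝ) (x : A) : A :=
  (1 - δ) • (Ring.inverse (1 - δ • x) * x)

section Resolvent

variable {R A : Type*} [CommRing R] [Ring A] [Algebra R A]

lemma inverse_one_sub_smul_sub_inverse_one_sub_smul {r s : R} {x : A}
    (h : IsUnit (1 - r • x) ↔ IsUnit (1 - s • x)) :
    Ring.inverse (1 - r • x) - Ring.inverse (1 - s • x) =
      (r - s) • (Ring.inverse (1 - r • x) * x * Ring.inverse (1 - s • x)) := by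
  have sub_eq : (1 - s • x) - (1 - r • x) = (r - s) • x := by
    rw [sub_sub_sub_cancel_left, sub_smul]
  rw [Ring.inverse_sub_inverse h, sub_eq, mul_smul_comm, smul_mul_assoc]

lemma inverse_one_sub_smul_mul_self_eq_add {r s : R} {x : A}
    (h : IsUnit (1 - r • x) ↔ IsUnit (1 - s • x)) :
    Ring.inverse (1 - s • x) * x = Ring.inverse (1 - r • x) * x +
      (s - r) • (Ring.inverse (1 - r • x) * x * (Ring.inverse (1 - s • x) * x)) := by
  rw [← neg_sub r s, neg_smul, ← mul_assoc _ _ x, ← smul_mul_assoc,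
    ← inverse_one_sub_smul_sub_inverse_one_sub_smul h, sub_mul, neg_sub, add_sub_cancel]

end Resolvent

lemma isUnit_one_sub_smul_of_norm_lt_one_of_norm_le_one {𝕜 A : Type*} [SeminormedRing 𝕜]
    [NormedRing A] [HasSummableGeomSeries A] [Module 𝕜 A] [IsBoundedSMul 𝕜 A] {δ : 𝕜} {x : A}
    (hδ : ‖δ‖ < 1) (hx : ‖x‖ ≤ 1) : IsUnit (1 - δ • x) :=
  isUnit_one_sub_of_norm_lt_one <|
    (norm_smul_le δ x).trans_lt (mul_lt_one_of_nonneg_of_lt_one_left (norm_nonneg δ) hδ hx)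

section SuccOp

variable {A : Type*} [NormedRing A] [NormedAlgebra ℝ A] {x : A} {β γ : ℝ}

lemma one_sub_smul_succOp (h : IsUnit (1 - β • x) ↔ IsUnit (1 - γ • x)) :
    (1 - β) • succOp γ x =
      (1 - γ) • succOp β x + (γ - β) • (succOp β x * succOp γ x) := by
  unfold succOp
  set b := Ring.inverse (1 - β • x) * x
  set c := Ring.inverse (1 - γ • x) * x
  have c_eq : c = b + (γ - β) • (b * c) := inverse_one_sub_smul_mul_self_eq_add h
  calc (1 - β) • (1 - γ) • c
      = (1 - β) • (1 - γ) • (b + (γ - β) • (b * c)) := by rw [← c_eq]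
    _ = (1 - γ) • (1 - β) • b + (γ - β) • ((1 - β) • b * (1 - γ) • c) := by
      rw [smul_mul_smul_comm]
      module

theorem stmt_6_general (hβ : β ≠ 1) (hβx : IsUnit (1 - β • x)) (hγx : IsUnit (1 - γ • x)) :
    succOp γ x
      = ((1 - γ) / (1 - β)) • succOp β x
        + ((γ - β) / (1 - β)) • (succOp β x * succOp γ x) := by
  have one_sub_ne_zero : 1 - β ≠ 0 := sub_ne_zero.mpr hβ.symm
  rw [← smul_right_inj one_sub_ne_zero, smul_add, smul_smul, smul_smul,
    mul_div_cancel₀ _ one_sub_ne_zero, mul_div_cancel₀ _ one_sub_ne_zero]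
  exact one_sub_smul_succOp (iff_of_true hβx hγx)

end SuccOp

/-- **Two-timescale decomposition.** In a real Banach algebra, for `‖x‖ ≤ 1` and
`0 ≤ β ≤ γ < 1`, `M_γ(x) = ((1-γ)/(1-β)) • M_β(x) + ((γ-β)/(1-β)) • (M_β(x) · M_γ(x))`. -/
theorem stmt_6 {A : Type*} [NormedRing A] [NormOneClass A] [NormedAlgebra ℝ A]
    [CompleteSpace A] (x : A) (hx : ‖x‖ ≤ 1) (β γ : ℝ)
    (hβ : 0 ≤ β) (hβγ : β ≤ γ) (hγ : γ < 1) :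
    succOp γ x
      = ((1 - γ) / (1 - β)) • succOp β x
        + ((γ - β) / (1 - β)) • (succOp β x * succOp γ x) := by
  exact stmt_6_general (hβγ.trans_lt hγ).ne
    (isUnit_one_sub_smul_of_norm_lt_one_of_norm_le_one (abs_lt.mpr ⟨by linarith, by linarith⟩) hx)
    (isUnit_one_sub_smul_of_norm_lt_one_of_norm_le_one (abs_lt.mpr ⟨by linarith, hγ⟩) hx)
end

section
/- Let A be a Banach algebra over ℝ, let x ∈ A with ‖x‖ ≤ 1, and let 0 ≤ β ≤ γ < 1. Then the successor operator satisfies the horizon-consistency Bellman identity M_γ(x) = (1-γ)·x + (γ·(1-γ)/(1-β)) · x · M_β(x) + (γ·(γ-β)/(1-β)) · x · M_β(x) · M_γ(x). -/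
/-!
The successor operator satisfies the Bellman equation `M_γ = (1 - γ) x + γ x M_γ`, and the
resolvent identity relates two discounts by `(1 - β) M_γ = (1 - γ) M_β + (γ - β) M_β M_γ`.
Solving the latter for `M_γ` and substituting it into the right-hand side of the former gives the
horizon-consistency identity.
-/

theorem inverse_one_sub_eq_one_add_mul {R : Type*} [Ring R] {a : R} (ha : IsUnit (1 - a)) :
    Ring.inverse (1 - a) = 1 + a * Ring.inverse (1 - a) := by
  rw [← sub_eq_iff_eq_add, ← one_sub_mul, Ring.mul_inverse_cancel _ ha]

theorem inverse_one_sub_smul_sub_inverse {R A : Type*} [CommRing R] [Ring A] [Algebra R A]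
    {r s : R} {x : A} (h : IsUnit (1 - r • x) ↔ IsUnit (1 - s • x)) :
    Ring.inverse (1 - s • x) - Ring.inverse (1 - r • x) =
      (s - r) • (Ring.inverse (1 - r • x) * x * Ring.inverse (1 - s • x)) := by
  have difference : (1 - s • x) - (1 - r • x) = -((s - r) • x) := by
    rw [sub_smul]
    abel
  rw [← neg_sub, Ring.inverse_sub_inverse h, difference, mul_neg, neg_mul, neg_neg, mul_smul_comm,
    smul_mul_assoc]

theorem isUnit_one_sub_smul_of_norm_le_one {𝕜 A : Type*} [NormedField 𝕜] [NormedRing A]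
    [NormedAlgebra 𝕜 A] [HasSummableGeomSeries A] {c : 𝕜} {x : A} (hc : ‖c‖ < 1) (hx : ‖x‖ ≤ 1) :
    IsUnit (1 - c • x) := by
  refine isUnit_one_sub_of_norm_lt_one ?_
  calc
    ‖c • x‖ = ‖c‖ * ‖x‖ := norm_smul c x
    _ ≤ ‖c‖ := mul_le_of_le_one_right (norm_nonneg c) hx
    _ < 1 := hc

section SuccOp

variable {A : Type*} [NormedRing A] [NormedAlgebra ℝ A] {β γ : ℝ} {x : A}

theorem succOp_eq_smul_add_smul_mul_succOp (hγ : IsUnit (1 - γ • x)) :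
    succOp γ x = (1 - γ) • x + γ • (x * succOp γ x) := by
  have resolvent_mul :
      Ring.inverse (1 - γ • x) * x = x + γ • (x * (Ring.inverse (1 - γ • x) * x)) := by
    conv_lhs => rw [inverse_one_sub_eq_one_add_mul hγ]
    rw [add_mul, one_mul, smul_mul_assoc, smul_mul_assoc, mul_assoc]
  conv_lhs => rw [succOp, resolvent_mul]
  rw [succOp, smul_add, mul_smul_comm, smul_comm γ]

theorem one_sub_smul_succOp_eq_smul_succOp_add (hβ : IsUnit (1 - β • x)) (hγ : IsUnit (1 - γ • x)) :
    (1 - β) • succOp γ x = (1 - γ) • succOp β x + (γ - β) • (succOp β x * succOp γ x) := by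
  have resolvent_identity := inverse_one_sub_smul_sub_inverse (iff_of_true hβ hγ)
  rw [← sub_eq_iff_eq_add']
  calc
    (1 - β) • succOp γ x - (1 - γ) • succOp β x
      = ((1 - β) * (1 - γ)) • ((Ring.inverse (1 - γ • x) - Ring.inverse (1 - β • x)) * x) := by
        simp only [succOp, sub_mul _ _ x, smul_sub, smul_smul, mul_comm (1 - γ)]
    _ = (γ - β) • (succOp β x * succOp γ x) := by
        rw [resolvent_identity]
        simp only [succOp, smul_mul_assoc, mul_smul_comm, smul_smul, mul_assoc]
        congr 1
        ring

theorem stmt_7_general (hβ : IsUnit (1 - β • x)) (hγ : IsUnit (1 - γ • x)) (hβ1 : β ≠ 1) :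
    succOp γ x
      = (1 - γ) • x
        + (γ * (1 - γ) / (1 - β)) • (x * succOp β x)
        + (γ * (γ - β) / (1 - β)) • (x * succOp β x * succOp γ x) := by
  have change_discount : succOp γ x =
      (1 - β)⁻¹ • ((1 - γ) • succOp β x + (γ - β) • (succOp β x * succOp γ x)) := by
    rw [eq_inv_smul_iff₀ (sub_ne_zero.mpr hβ1.symm), one_sub_smul_succOp_eq_smul_succOp_add hβ hγ]
  calc
    succOp γ x = (1 - γ) • x + γ • (x * succOp γ x) := succOp_eq_smul_add_smul_mul_succOp hγ
    _ = (1 - γ) • x + γ • (x * ((1 - β)⁻¹ •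
          ((1 - γ) • succOp β x + (γ - β) • (succOp β x * succOp γ x)))) := by
        rw [← change_discount]
    _ = _ := by
        simp only [mul_add, smul_add, mul_smul_comm, smul_smul, mul_assoc, add_assoc,
          div_eq_mul_inv, mul_comm (1 - β)⁻¹]

end SuccOp

/-- **Horizon-consistency Bellman identity (operator form of Eq. (3)).** In a real Banach
algebra, for `‖x‖ ≤ 1` and `0 ≤ β ≤ γ < 1`,
`M_γ(x) = (1-γ)·x + (γ(1-γ)/(1-β))·x·M_β(x) + (γ(γ-β)/(1-β))·x·M_β(x)·M_γ(x)`. -/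
theorem stmt_7 {A : Type*} [NormedRing A] [NormOneClass A] [NormedAlgebra ℝ A]
    [CompleteSpace A] (x : A) (hx : ‖x‖ ≤ 1) (β γ : ℝ)
    (hβ : 0 ≤ β) (hβγ : β ≤ γ) (hγ : γ < 1) :
    succOp γ x
      = (1 - γ) • x
        + (γ * (1 - γ) / (1 - β)) • (x * succOp β x)
        + (γ * (γ - β) / (1 - β)) • (x * succOp β x * succOp γ x) := by
  have isUnit_of_le {δ : ℝ} (hδ : 0 ≤ δ) (hδγ : δ ≤ γ) : IsUnit (1 - δ • x) :=
    isUnit_one_sub_smul_of_norm_le_one ((Real.norm_of_nonneg hδ).trans_lt (hδγ.trans_lt hγ)) hx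
  exact stmt_7_general (isUnit_of_le hβ hβγ) (isUnit_of_le (hβ.trans hβγ) le_rfl)
    (hβγ.trans_lt hγ).ne
end

section
/- (Theorem 1, operator form.) In the GSP operator setting, the successor operator of the geometric switching policy decomposes as N_1 = ∑_{k=1}^n w_k · (M_1 · M_2 · ⋯ · M_k), where w_k := ((1-γ)/(1-β_k)) · ∏_{i=1}^{k-1} (γ-β_i)/(1-β_i) are the GSP weights. -/
/-- Auxiliary backward recursion for the GSP operators: `gspNAux γ α x n j = N (n-1-j)`
(0-indexed), where `N (n-1) = M_γ(x (n-1))` and, for `l < n-1`,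
`N l = (1 - β_l·x_l)⁻¹ · ((1-γ)·x_l + γ·α_l·x_l·N (l+1))` with `β_l = γ·(1-α_l)`. -/
noncomputable def gspNAux {A : Type*} [NormedRing A] [NormedAlgebra ℝ A]
    (γ : ℝ) (α : ℕ → ℝ) (x : ℕ → A) (n : ℕ) : ℕ → A
  | 0 => succOp γ (x (n - 1))
  | j + 1 =>
      Ring.inverse (1 - (γ * (1 - α (n - 1 - (j + 1)))) • x (n - 1 - (j + 1))) *
        ((1 - γ) • x (n - 1 - (j + 1)) +
          (γ * α (n - 1 - (j + 1))) • (x (n - 1 - (j + 1)) * gspNAux γ α x n j))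

/-- The GSP operators `N l` (0-indexed, `l = 0, …, n-1`), defined by backward recursion. -/
noncomputable def gspN {A : Type*} [NormedRing A] [NormedAlgebra ℝ A]
    (γ : ℝ) (α : ℕ → ℝ) (x : ℕ → A) (n : ℕ) (l : ℕ) : A :=
  gspNAux γ α x n (n - 1 - l)

/-!
The Bellman equation `N l = (1 - γ) x_l + β_l x_l N l + (γ - β_l) x_l N (l + 1)` can be solved for
`N l` because `1 - β_l x_l` is a unit, and the solution is affine in `N (l + 1)`:
`N l = u_l M_l + v_l M_l N (l + 1)` with `u_l = (1 - γ) / (1 - β_l)`, `v_l = (γ - β_l) / (1 - β_l)`.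
Unrolling this recursion `n` times gives the weighted sum plus a remainder carrying the factor
`v_{n-1}`, which vanishes because `β_{n-1} = γ`.
-/

theorem eq_sum_add_of_affine_recursion {R A : Type*} [CommSemiring R] [Semiring A] [Algebra R A]
    {u v : ℕ → R} {M N : ℕ → A} {n : ℕ}
    (hN : ∀ l < n, N l = u l • M l + v l • (M l * N (l + 1))) :
    N 0 = ∑ k ∈ Finset.range n,
          (u k * ∏ i ∈ Finset.range k, v i) • ((List.range (k + 1)).map M).prod
        + (∏ i ∈ Finset.range n, v i) • (((List.range n).map M).prod * N n) := by
  induction n with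
  | zero => simp
  | succ n ih =>
    have unroll_last : (∏ i ∈ Finset.range n, v i) • (((List.range n).map M).prod * N n)
        = (u n * ∏ i ∈ Finset.range n, v i) • ((List.range (n + 1)).map M).prod
          + (∏ i ∈ Finset.range (n + 1), v i) •
              (((List.range (n + 1)).map M).prod * N (n + 1)) := by
      rw [hN n n.lt_succ_self, Finset.prod_range_succ, List.range_succ, List.map_append,
        List.map_singleton, List.prod_append, List.prod_singleton, mul_add, smul_add,
        mul_smul_comm, mul_smul_comm, smul_smul, smul_smul, mul_assoc, mul_comm (u n)]
    rw [ih fun l hl => hN l (hl.trans n.lt_succ_self), unroll_last, Finset.sum_range_succ,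
      add_assoc]

theorem eq_inverse_one_sub_mul_iff {A : Type*} [Ring A] {a N r : A} (ha : IsUnit (1 - a)) :
    N = Ring.inverse (1 - a) * r ↔ N = r + a * N := by
  rw [eq_comm, Ring.inverse_mul_eq_iff_eq_mul _ _ _ ha, sub_mul, one_mul, eq_sub_iff_add_eq,
    eq_comm]

theorem isUnit_one_sub_smul {𝕜 A : Type*} [NormedField 𝕜] [NormedRing A] [NormedAlgebra 𝕜 A]
    [CompleteSpace A] {δ : 𝕜} {x : A} (hδ : ‖δ‖ < 1) (hx : ‖x‖ ≤ 1) : IsUnit (1 - δ • x) := by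
  refine isUnit_one_sub_of_norm_lt_one ?_
  calc ‖δ • x‖ = ‖δ‖ * ‖x‖ := norm_smul δ x
    _ ≤ ‖δ‖ := mul_le_of_le_one_right (norm_nonneg δ) hx
    _ < 1 := hδ

theorem mul_one_sub_mem_Ico {γ a : ℝ} (hγ : γ ∈ Set.Ico (0 : ℝ) 1) (ha : a ∈ Set.Icc (0 : ℝ) 1) :
    γ * (1 - a) ∈ Set.Ico (0 : ℝ) 1 :=
  ⟨mul_nonneg hγ.1 (sub_nonneg.2 ha.2),
    (mul_le_of_le_one_right hγ.1 (sub_le_self 1 ha.1)).trans_lt hγ.2⟩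

section

variable {A : Type*} [NormedRing A] [NormedAlgebra ℝ A]

theorem inverse_one_sub_smul_mul {δ : ℝ} (hδ : δ ≠ 1) (x : A) :
    Ring.inverse (1 - δ • x) * x = (1 - δ)⁻¹ • succOp δ x := by
  rw [succOp, inv_smul_smul₀ (sub_ne_zero.2 hδ.symm)]

theorem eq_smul_succOp_add_of_bellman {γ β : ℝ} {x N Nnext : A} (hβ : β ≠ 1)
    (hunit : IsUnit (1 - β • x))
    (hN : N = (1 - γ) • x + β • (x * N) + (γ - β) • (x * Nnext)) :
    N = ((1 - γ) / (1 - β)) • succOp β x + ((γ - β) / (1 - β)) • (succOp β x * Nnext) := by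
  have hN_solved : N = Ring.inverse (1 - β • x) * ((1 - γ) • x + (γ - β) • (x * Nnext)) := by
    rwa [eq_inverse_one_sub_mul_iff hunit, smul_mul_assoc, add_right_comm]
  rw [hN_solved, mul_add, mul_smul_comm, mul_smul_comm, ← mul_assoc,
    inverse_one_sub_smul_mul hβ, smul_mul_assoc, smul_smul, smul_smul, ← div_eq_mul_inv,
    ← div_eq_mul_inv]

theorem succOp_bellman {δ : ℝ} {x : A} (hunit : IsUnit (1 - δ • x)) :
    succOp δ x = (1 - δ) • x + δ • (x * succOp δ x) := by
  rw [← smul_mul_assoc, ← eq_inverse_one_sub_mul_iff hunit, succOp, mul_smul_comm]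

theorem gspN_pred (γ : ℝ) (α : ℕ → ℝ) (x : ℕ → A) (n : ℕ) :
    gspN γ α x n (n - 1) = succOp γ (x (n - 1)) := by
  rw [gspN, Nat.sub_self, gspNAux]

theorem gspN_of_succ_lt (γ : ℝ) (α : ℕ → ℝ) (x : ℕ → A) {n l : ℕ} (hl : l + 1 < n) :
    gspN γ α x n l = Ring.inverse (1 - (γ * (1 - α l)) • x l) *
      ((1 - γ) • x l + (γ * α l) • (x l * gspN γ α x n (l + 1))) := by
  have steps_left : n - 1 - l = n - 1 - (l + 1) + 1 := by lia
  have index_eq : n - 1 - (n - 1 - (l + 1) + 1) = l := by lia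
  rw [gspN, steps_left, gspNAux, index_eq, gspN]

theorem gspN_bellman {γ : ℝ} {α : ℕ → ℝ} {x : ℕ → A} {n l : ℕ} (hαn : α (n - 1) = 0)
    (hl : l < n) (hunit : IsUnit (1 - (γ * (1 - α l)) • x l)) :
    gspN γ α x n l = (1 - γ) • x l + (γ * (1 - α l)) • (x l * gspN γ α x n l)
      + (γ - γ * (1 - α l)) • (x l * gspN γ α x n (l + 1)) := by
  have switch_coeff : γ - γ * (1 - α l) = γ * α l := by ring
  rw [switch_coeff]
  rcases (Nat.succ_le_of_lt hl).lt_or_eq with hl_lt | rfl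
  · rw [add_right_comm, ← smul_mul_assoc (γ * (1 - α l)), ← eq_inverse_one_sub_mul_iff hunit]
    exact gspN_of_succ_lt γ α x hl_lt
  · rw [Nat.succ_sub_one] at hαn
    have gspN_last : gspN γ α x (l + 1) l = succOp γ (x l) := gspN_pred γ α x (l + 1)
    rw [hαn, sub_zero, mul_one] at hunit ⊢
    rw [mul_zero, zero_smul, add_zero, gspN_last]
    exact succOp_bellman hunit

theorem stmt_9_general {n : ℕ} (hn : 1 ≤ n) {x N : ℕ → A} {γ : ℝ} {β : ℕ → ℝ}
    (hβ : ∀ k < n, β k ≠ 1) (hβn : β (n - 1) = γ) (hunit : ∀ k < n, IsUnit (1 - β k • x k))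
    (hN : ∀ l < n,
      N l = (1 - γ) • x l + β l • (x l * N l) + (γ - β l) • (x l * N (l + 1))) :
    N 0 = ∑ k ∈ Finset.range n,
        (((1 - γ) / (1 - β k)) * ∏ i ∈ Finset.range k, (γ - β i) / (1 - β i)) •
          ((List.range (k + 1)).map fun i => succOp (β i) (x i)).prod := by
  have remainder_coeff : ∏ i ∈ Finset.range n, (γ - β i) / (1 - β i) = 0 :=
    Finset.prod_eq_zero (Finset.mem_range.2 (Nat.sub_one_lt_of_lt hn))
      (by rw [hβn, sub_self, zero_div])
  rw [eq_sum_add_of_affine_recursion fun l hl =>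
      eq_smul_succOp_add_of_bellman (hβ l hl) (hunit l hl) (hN l hl),
    remainder_coeff, zero_smul, add_zero]

end

/-- **Theorem 1 (operator form): GSP successor-operator decomposition.** In the GSP
operator setting (0-indexed), the successor operator of the geometric switching policy
decomposes as `N 0 = ∑_{k<n} w_k • (M_0 · M_1 · ⋯ · M_k)`, where
`β_i = γ·(1-α_i)`, `M_i = M_{β_i}(x_i)`, and
`w_k = ((1-γ)/(1-β_k)) · ∏_{i<k} (γ-β_i)/(1-β_i)` are the GSP weights. -/
theorem stmt_9 {A : Type*} [NormedRing A] [NormOneClass A] [NormedAlgebra ℝ A]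
    [CompleteSpace A] (n : ℕ) (hn : 1 ≤ n) (x : ℕ → A) (hx : ∀ k < n, ‖x k‖ ≤ 1)
    (γ : ℝ) (hγ : γ ∈ Set.Ioo (0 : ℝ) 1)
    (α : ℕ → ℝ) (hα : ∀ k < n, α k ∈ Set.Icc (0 : ℝ) 1) (hαn : α (n - 1) = 0) :
    gspN γ α x n 0
      = ∑ k ∈ Finset.range n,
          (((1 - γ) / (1 - γ * (1 - α k))) *
              ∏ i ∈ Finset.range k, (γ - γ * (1 - α i)) / (1 - γ * (1 - α i))) •
            ((List.range (k + 1)).map fun i => succOp (γ * (1 - α i)) (x i)).prod := by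
  have hβ : ∀ k < n, γ * (1 - α k) ∈ Set.Ico (0 : ℝ) 1 := fun k hk =>
    mul_one_sub_mem_Ico (Set.Ioo_subset_Ico_self hγ) (hα k hk)
  have hunit : ∀ k < n, IsUnit (1 - (γ * (1 - α k)) • x k) := fun k hk =>
    isUnit_one_sub_smul ((Real.norm_of_nonneg (hβ k hk).1).trans_lt (hβ k hk).2) (hx k hk)
  exact stmt_9_general hn (fun k hk => (hβ k hk).2.ne) (by rw [hαn, sub_zero, mul_one]) hunit
    fun l hl => gspN_bellman hαn hl (hunit l hl)
end

section
/- (Lemma 1, finite-state form: unbiasedness of the GSP value estimator.) Let S be a nonempty finite set, let P_1, …, P_n be row-stochastic matrices on S, let γ ∈ (0,1), let α_1, …, α_n ∈ [0,1] with α_n = 0, and set β_k := γ·(1-α_k). Let M_k := (1-β_k)·(I - β_k·P_k)⁻¹·P_k be the successor matrices, let w_k := ((1-γ)/(1-β_k)) · ∏_{i=1}^{k-1} (γ-β_i)/(1-β_i) be the GSP weights, and let N_1 be the GSP matrix defined by the backward recursion N_n := (1-γ)·(I - γ·P_n)⁻¹·P_n and N_l := (I - β_l·P_l)⁻¹·((1-γ)·P_l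 + γ·α_l·P_l·N_{l+1}) for l = n-1, …, 1. Then for every reward function r : S → ℝ and initial state s_0 ∈ S, ∑_{(s_1,…,s_n) ∈ Sⁿ} (∏_{k=1}^n M_k(s_{k-1}, s_k)) · ((1-γ)⁻¹ ∑_{k=1}^n w_k · r(s_k)) = (1-γ)⁻¹ · (N_1 r)(s_0); that is, the compositional single-sample estimator Q̂ = (1-γ)⁻¹ ∑_k w_k r(S_k⁺), where S_k⁺ is sampled by chaining the successor matrices M_1, …, M_k from s_0, is an unbiased estimate of the GSP value (1-γ)⁻¹ (N_1 r)(s_0). -/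
/-- A real square matrix is row-stochastic if its entries are nonnegative and each of its
rows sums to `1`. -/
def RowStochastic {S : Type*} [Fintype S] (P : Matrix S S ℝ) : Prop :=
  (∀ s s', 0 ≤ P s s') ∧ ∀ s, ∑ s', P s s' = 1

/-- Auxiliary backward recursion for the GSP matrices: `gspNMatAux γ α P n j = N (n-1-j)`
(0-indexed), with `N (n-1) = (1-γ) • ((1 - γ•P (n-1))⁻¹ * P (n-1))` and, for `l < n-1`,
`N l = (1 - β_l • P_l)⁻¹ * ((1-γ) • P_l + (γ·α_l) • (P_l * N (l+1)))`, `β_l = γ·(1-α_l)`. -/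
noncomputable def gspNMatAux {S : Type*} [Fintype S] [DecidableEq S]
    (γ : ℝ) (α : ℕ → ℝ) (P : ℕ → Matrix S S ℝ) (n : ℕ) : ℕ → Matrix S S ℝ
  | 0 => (1 - γ) • ((1 - γ • P (n - 1))⁻¹ * P (n - 1))
  | j + 1 =>
      (1 - (γ * (1 - α (n - 1 - (j + 1)))) • P (n - 1 - (j + 1)))⁻¹ *
        ((1 - γ) • P (n - 1 - (j + 1)) +
          (γ * α (n - 1 - (j + 1))) • (P (n - 1 - (j + 1)) * gspNMatAux γ α P n j))

/-- The GSP matrices `N l` (0-indexed, `l = 0, …, n-1`), defined by backward recursion. -/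
noncomputable def gspNMat {S : Type*} [Fintype S] [DecidableEq S]
    (γ : ℝ) (α : ℕ → ℝ) (P : ℕ → Matrix S S ℝ) (n : ℕ) (l : ℕ) : Matrix S S ℝ :=
  gspNMatAux γ α P n (n - 1 - l)

/-!
With `a k = (1 - γ) / (1 - β k)` and `ρ k = (γ - β k) / (1 - β k)`, the GSP matrices satisfy
`N k = M k * (a k • 1 + ρ k • N (k + 1))`, so the vectors `N k *ᵥ r` solve the Bellman equation of
the chain with transition matrices `M k`, stage rewards `a k • r` and discount factors `ρ k`.
Unrolling it along the chain expresses `N 0 *ᵥ r` as the expected discounted return plus a terminal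
term with coefficient `∏ k < n, ρ k`. As `α (n - 1) = 0` makes `ρ (n - 1) = 0`, that term vanishes.
-/

open scoped Matrix

section Paths

variable {S R : Type*} [CommSemiring R] {n : ℕ}

/-- The probability that the time-inhomogeneous chain started at `s`, with transition matrix `M k`
at time `k`, follows the path `f`, the `M k` being stochastic. The path lists the states at times
`1, …, n`, so `f k` is the state at time `k + 1`. -/
def pathWeight (M : ℕ → Matrix S S R) (s : S) (f : Fin n → S) : R :=
  ∏ k : Fin n, M k ((Fin.cons s f : Fin (n + 1) → S) k.castSucc) (f k)

/-- The return of the path `f` when the `k`-th transition is rewarded by `c k` of the state it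
reaches, and every reward after it is discounted by `ρ k`. -/
def discountedReturn (ρ : ℕ → R) (c : ℕ → S → R) (f : Fin n → S) : R :=
  ∑ k : Fin n, (∏ i ∈ Finset.range k, ρ i) * c k (f k)

theorem pathWeight_cons (M : ℕ → Matrix S S R) (s t : S) (f : Fin n → S) :
    pathWeight M s (Fin.cons t f : Fin (n + 1) → S) =
      M 0 s t * pathWeight (fun k => M (k + 1)) t f := by
  simp [pathWeight, Fin.prod_univ_succ]

theorem discountedReturn_cons (ρ : ℕ → R) (c : ℕ → S → R) (t : S) (f : Fin n → S) :
    discountedReturn ρ c (Fin.cons t f : Fin (n + 1) → S) =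
      c 0 t + ρ 0 * discountedReturn (fun k => ρ (k + 1)) (fun k => c (k + 1)) f := by
  simp [discountedReturn, Fin.sum_univ_succ, Finset.prod_range_succ', Finset.mul_sum, mul_comm,
    mul_left_comm]

variable [Fintype S]

theorem pathWeight_succ_dotProduct (M : ℕ → Matrix S S R) (s : S) (X : (Fin (n + 1) → S) → R) :
    pathWeight M s ⬝ᵥ X =
      ∑ t, M 0 s t * (pathWeight (fun k => M (k + 1)) t ⬝ᵥ fun f => X (Fin.cons t f)) :=
  calc ∑ f, pathWeight M s f * X f
      = ∑ t, ∑ f : Fin n → S,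
          pathWeight M s (Fin.cons t f : Fin (n + 1) → S) * X (Fin.cons t f) := by
        rw [← (Fin.consEquiv fun _ : Fin (n + 1) => S).sum_comp, Fintype.sum_prod_type]
        rfl
    _ = _ := by simp only [pathWeight_cons, mul_assoc, Finset.mul_sum, dotProduct]

theorem pathWeight_dotProduct_one {M : ℕ → Matrix S S R} (hM : ∀ k < n, M k *ᵥ 1 = 1) (s : S) :
    pathWeight M s ⬝ᵥ (1 : (Fin n → S) → R) = 1 := by
  induction n generalizing M s with
  | zero => simp [pathWeight, dotProduct]
  | succ n ih =>
    have tail_mass (t : S) : pathWeight (fun k => M (k + 1)) t ⬝ᵥ (1 : (Fin n → S) → R) = 1 :=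
      ih (fun k hk => hM (k + 1) (by omega)) t
    calc pathWeight M s ⬝ᵥ 1
        = ∑ t, M 0 s t * (pathWeight (fun k => M (k + 1)) t ⬝ᵥ (1 : (Fin n → S) → R)) :=
          pathWeight_succ_dotProduct M s 1
      _ = (M 0 *ᵥ 1) s := by
          simp only [tail_mass]
          rfl
      _ = 1 := by rw [hM 0 n.succ_pos, Pi.one_apply]

theorem expected_discountedReturn_of_bellman {M : ℕ → Matrix S S R} {ρ : ℕ → R} {c V : ℕ → S → R}
    (hM : ∀ k < n, M k *ᵥ 1 = 1) (hV : ∀ k < n, V k = M k *ᵥ (c k + ρ k • V (k + 1))) (s : S) :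
    (pathWeight M s ⬝ᵥ fun f : Fin n → S => discountedReturn ρ c f +
      (∏ k ∈ Finset.range n, ρ k) * V n ((Fin.cons s f : Fin (n + 1) → S) (Fin.last n))) =
      V 0 s := by
  induction n generalizing M ρ c V s with
  | zero => simp [pathWeight, discountedReturn, dotProduct]
  | succ n ih =>
    let M' : ℕ → Matrix S S R := fun k => M (k + 1)
    let Y : S → (Fin n → S) → R := fun t f =>
      discountedReturn (fun k => ρ (k + 1)) (fun k => c (k + 1)) f +
        (∏ k ∈ Finset.range n, ρ (k + 1)) *
          V (n + 1) ((Fin.cons t f : Fin (n + 1) → S) (Fin.last n))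
    have hM' : ∀ k < n, M' k *ᵥ 1 = 1 := fun k hk => hM (k + 1) (by omega)
    have tail_value (t : S) : pathWeight M' t ⬝ᵥ Y t = V 1 t :=
      ih (V := fun k => V (k + 1)) hM' (fun k hk => hV (k + 1) (by omega)) t
    have tail_expectation (t : S) :
        pathWeight M' t ⬝ᵥ (c 0 t • (1 : (Fin n → S) → R) + ρ 0 • Y t) =
          (c 0 + ρ 0 • V 1) t := by
      simp [dotProduct_add, dotProduct_smul, pathWeight_dotProduct_one hM', tail_value]
    rw [hV 0 n.succ_pos, pathWeight_succ_dotProduct, Matrix.mulVec, dotProduct]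
    refine Finset.sum_congr rfl fun t _ => ?_
    rw [← tail_expectation t]
    congr 2
    funext f
    simp only [Y, discountedReturn_cons, Finset.prod_range_succ', ← Fin.succ_last, Fin.cons_succ,
      Pi.add_apply, Pi.smul_apply, Pi.one_apply, smul_eq_mul]
    ring

end Paths

section SuccessorMatrix

variable {S R : Type*} [Fintype S] [DecidableEq S]

/-- The successor matrix of the kernel `P` with discount `δ`: the normalized discounted occupancy
`(1 - δ) ∑ t, δ ^ t P ^ (t + 1)`, in closed form. It is a junk value unless `1 - δ • P` is
invertible. -/
noncomputable def successorMatrix [CommRing R] (δ : R) (P : Matrix S S R) : Matrix S S R :=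
  (1 - δ) • ((1 - δ • P)⁻¹ * P)

section CommRing

variable [CommRing R] {δ : R} {P : Matrix S S R}

theorem one_sub_smul_mulVec_one (hP : P *ᵥ 1 = 1) :
    (1 - δ • P) *ᵥ 1 = (1 - δ) • (1 : S → R) := by
  rw [Matrix.sub_mulVec, Matrix.smul_mulVec, hP, Matrix.one_mulVec, sub_smul, one_smul]

theorem successorMatrix_mulVec_one (hP : P *ᵥ 1 = 1) (hδ : IsUnit (1 - δ • P)) :
    successorMatrix δ P *ᵥ 1 = 1 := by
  have hdet : IsUnit (1 - δ • P).det := (Matrix.isUnit_iff_isUnit_det _).1 hδ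
  rw [successorMatrix, Matrix.smul_mulVec, ← Matrix.mulVec_mulVec, hP, ← Matrix.mulVec_smul,
    ← one_sub_smul_mulVec_one hP, Matrix.mulVec_mulVec, Matrix.nonsing_inv_mul _ hdet,
    Matrix.one_mulVec]

theorem one_sub_ne_zero_of_isUnit_one_sub_smul [Nontrivial R] [Nonempty S]
    (hP : P *ᵥ 1 = 1) (hδ : IsUnit (1 - δ • P)) : 1 - δ ≠ 0 := by
  intro h
  have hker : (1 - δ • P) *ᵥ 1 = (1 - δ • P) *ᵥ 0 := by
    rw [one_sub_smul_mulVec_one hP, h, zero_smul, Matrix.mulVec_zero]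
  exact one_ne_zero (Matrix.mulVec_injective_of_isUnit hδ hker)

end CommRing

theorem successorMatrix_mul_smul_one_add_smul [Field R] {γ δ : R} (hδ : 1 - δ ≠ 0)
    (P N : Matrix S S R) :
    successorMatrix δ P * (((1 - γ) / (1 - δ)) • 1 + ((γ - δ) / (1 - δ)) • N) =
      (1 - δ • P)⁻¹ * ((1 - γ) • P + (γ - δ) • (P * N)) := by
  simp only [successorMatrix, Matrix.mul_add, Matrix.mul_smul, Matrix.smul_mul, Matrix.mul_one,
    Matrix.mul_assoc, smul_smul, div_mul_cancel₀ _ hδ]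

end SuccessorMatrix

theorem abs_mul_one_sub_lt_one {R : Type*} [CommRing R] [LinearOrder R] [IsStrictOrderedRing R]
    {γ a : R} (hγ : |γ| < 1) (ha : a ∈ Set.Icc 0 1) : |γ * (1 - a)| < 1 := by
  rw [abs_mul, abs_of_nonneg (sub_nonneg.2 ha.2)]
  exact mul_lt_one_of_nonneg_of_lt_one_left (abs_nonneg γ) hγ (sub_le_self 1 ha.1)

namespace RowStochastic

variable {S : Type*} [Fintype S] {P : Matrix S S ℝ}

theorem mulVec_one (hP : RowStochastic P) : P *ᵥ 1 = 1 := by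
  ext s
  simpa [Matrix.mulVec, dotProduct] using hP.2 s

theorem isUnit_one_sub_smul [DecidableEq S] (hP : RowStochastic P) {δ : ℝ} (hδ : |δ| < 1) :
    IsUnit (1 - δ • P) := by
  rw [Matrix.isUnit_iff_isUnit_det, isUnit_iff_ne_zero]
  refine det_ne_zero_of_sum_row_lt_diag fun s => ?_
  have off_diagonal_sum : ∑ t ∈ Finset.univ.erase s, P s t = 1 - P s s := by
    rw [Finset.sum_erase_eq_sub (Finset.mem_univ s), hP.2 s]
  calc ∑ t ∈ Finset.univ.erase s, ‖(1 - δ • P) s t‖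
      = ∑ t ∈ Finset.univ.erase s, |δ| * P s t := by
        refine Finset.sum_congr rfl fun t ht => ?_
        simp [Matrix.one_apply_ne (Finset.ne_of_mem_erase ht).symm, abs_of_nonneg (hP.1 s t)]
    _ = |δ| - |δ| * P s s := by rw [← Finset.mul_sum, off_diagonal_sum, mul_one_sub]
    _ < 1 - |δ * P s s| := by rw [abs_mul, abs_of_nonneg (hP.1 s s)]; gcongr
    _ ≤ |1 - δ * P s s| := by simpa using abs_sub_abs_le_abs_sub 1 (δ * P s s)
    _ = ‖(1 - δ • P) s s‖ := by simp

end RowStochastic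

section GSP

variable {S : Type*} [Fintype S] [DecidableEq S] (γ : ℝ) (α : ℕ → ℝ) (P : ℕ → Matrix S S ℝ)

theorem gspNMat_last (n : ℕ) : gspNMat γ α P n (n - 1) = successorMatrix γ (P (n - 1)) := by
  simp [gspNMat, gspNMatAux, successorMatrix]

theorem gspNMat_of_succ_lt {n k : ℕ} (hk : k + 1 < n) :
    gspNMat γ α P n k = (1 - (γ * (1 - α k)) • P k)⁻¹ *
      ((1 - γ) • P k + (γ * α k) • (P k * gspNMat γ α P n (k + 1))) := by
  obtain ⟨j, rfl⟩ : ∃ j, n = k + 1 + j + 1 := ⟨n - (k + 2), by omega⟩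
  have hj : k + 1 + j + 1 - 1 - k = j + 1 := by omega
  have hj' : k + 1 + j + 1 - 1 - (k + 1) = j := by omega
  have hk' : k + 1 + j + 1 - 1 - (j + 1) = k := by omega
  simp only [gspNMat, hj, hj', gspNMatAux, hk']

variable {γ α P}

-- For `k = n - 1` the junk matrix `gspNMat γ α P n n` occurs with coefficient `0`.
theorem gspNMat_eq_successorMatrix_mul {n k : ℕ} (hk : k < n) (hα : α (n - 1) = 0)
    (hβ : 1 - γ * (1 - α k) ≠ 0) :
    gspNMat γ α P n k = successorMatrix (γ * (1 - α k)) (P k) *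
      (((1 - γ) / (1 - γ * (1 - α k))) • 1 +
        ((γ - γ * (1 - α k)) / (1 - γ * (1 - α k))) • gspNMat γ α P n (k + 1)) := by
  rcases Nat.lt_or_eq_of_le (Nat.succ_le_of_lt hk) with hlt | rfl
  · rw [successorMatrix_mul_smul_one_add_smul hβ, gspNMat_of_succ_lt γ α P hlt, mul_one_sub,
      sub_sub_cancel]
  · have hαk : α k = 0 := hα
    have hγ : 1 - γ ≠ 0 := by simpa [hαk] using hβ
    have hlast : gspNMat γ α P (k + 1) k = successorMatrix γ (P k) := gspNMat_last γ α P (k + 1)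
    simp [hlast, hαk, div_self hγ]

theorem gspNMat_mulVec_bellman {n k : ℕ} (hk : k < n) (hα : α (n - 1) = 0)
    (hβ : 1 - γ * (1 - α k) ≠ 0) (r : S → ℝ) :
    gspNMat γ α P n k *ᵥ r = successorMatrix (γ * (1 - α k)) (P k) *ᵥ
      (((1 - γ) / (1 - γ * (1 - α k))) • r +
        ((γ - γ * (1 - α k)) / (1 - γ * (1 - α k))) • gspNMat γ α P n (k + 1) *ᵥ r) := by
  rw [gspNMat_eq_successorMatrix_mul hk hα hβ, ← Matrix.mulVec_mulVec, Matrix.add_mulVec,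
    Matrix.smul_mulVec, Matrix.smul_mulVec, Matrix.one_mulVec]

theorem gspNMat_zero_mulVec_eq_expected_discountedReturn {n : ℕ} (hn : 1 ≤ n)
    (hP : ∀ k < n, P k *ᵥ 1 = 1) (hunit : ∀ k < n, IsUnit (1 - (γ * (1 - α k)) • P k))
    (hα : α (n - 1) = 0) (r : S → ℝ) (s : S) :
    (gspNMat γ α P n 0 *ᵥ r) s =
      pathWeight (fun k => successorMatrix (γ * (1 - α k)) (P k)) s ⬝ᵥ
        fun f : Fin n → S => discountedReturn
          (fun k => (γ - γ * (1 - α k)) / (1 - γ * (1 - α k)))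
          (fun k => ((1 - γ) / (1 - γ * (1 - α k))) • r) f := by
  have : Nonempty S := ⟨s⟩
  have terminal_coeff :
      ∏ k ∈ Finset.range n, (γ - γ * (1 - α k)) / (1 - γ * (1 - α k)) = 0 :=
    Finset.prod_eq_zero (Finset.mem_range.2 (Nat.sub_one_lt_of_lt hn)) (by simp [hα])
  have unrolled := expected_discountedReturn_of_bellman (V := fun k => gspNMat γ α P n k *ᵥ r)
    (fun k hk => successorMatrix_mulVec_one (hP k hk) (hunit k hk))
    (fun k hk => gspNMat_mulVec_bellman hk hα
      (one_sub_ne_zero_of_isUnit_one_sub_smul (hP k hk) (hunit k hk)) r) s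
  simpa only [terminal_coeff, zero_mul, add_zero] using unrolled.symm

end GSP

theorem stmt_14_general {S : Type*} [Fintype S] [DecidableEq S]
    (n : ℕ) (hn : 1 ≤ n) (P : ℕ → Matrix S S ℝ) (hP : ∀ k < n, P k *ᵥ 1 = 1)
    (γ : ℝ) (α : ℕ → ℝ) (hunit : ∀ k < n, IsUnit (1 - (γ * (1 - α k)) • P k))
    (hαn : α (n - 1) = 0) (r : S → ℝ) (s₀ : S) :
    ∑ f : Fin n → S,
        (∏ k : Fin n,
            ((1 - γ * (1 - α k.val)) •
                ((1 - (γ * (1 - α k.val)) • P k.val)⁻¹ * P k.val))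
              ((Fin.cons s₀ f : Fin (n + 1) → S) k.castSucc) (f k)) *
          ((1 - γ)⁻¹ *
            ∑ k : Fin n,
              (((1 - γ) / (1 - γ * (1 - α k.val))) *
                  ∏ i ∈ Finset.range k.val,
                    (γ - γ * (1 - α i)) / (1 - γ * (1 - α i))) * r (f k))
      = (1 - γ)⁻¹ * (gspNMat γ α P n 0).mulVec r s₀ := by
  rw [gspNMat_zero_mulVec_eq_expected_discountedReturn hn hP hunit hαn, dotProduct, Finset.mul_sum]
  refine Finset.sum_congr rfl fun f _ => ?_
  rw [mul_left_comm]
  simp only [pathWeight, discountedReturn, successorMatrix, Pi.smul_apply, smul_eq_mul,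
    mul_left_comm, mul_assoc]

/-- **Lemma 1 (finite-state form): unbiasedness of the GSP value estimator.** With
row-stochastic `P 0, …, P (n-1)` (0-indexed), `γ ∈ (0,1)`, switching probabilities
`α k ∈ [0,1]` with `α (n-1) = 0`, effective discounts `β k = γ·(1-α k)`, successor
matrices `M k = (1-β k) • ((1 - β k • P k)⁻¹ * P k)`, GSP weights
`w k = ((1-γ)/(1-β k)) · ∏_{i<k} (γ-β i)/(1-β i)`, and the backward-recursed GSP matrix
`N 0`: for every reward `r` and initial state `s₀`, the expectation over trajectories
`(s_1, …, s_n)` of the chain with transition matrices `M 0, …, M (n-1)` of the estimator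
`(1-γ)⁻¹ ∑_k w_k r(s_k)` equals the GSP value `(1-γ)⁻¹ (N 0 r)(s₀)`. -/
theorem stmt_14 {S : Type*} [Fintype S] [DecidableEq S] [Nonempty S]
    (n : ℕ) (hn : 1 ≤ n) (P : ℕ → Matrix S S ℝ) (hP : ∀ k < n, RowStochastic (P k))
    (γ : ℝ) (hγ : γ ∈ Set.Ioo (0 : ℝ) 1)
    (α : ℕ → ℝ) (hα : ∀ k < n, α k ∈ Set.Icc (0 : ℝ) 1) (hαn : α (n - 1) = 0)
    (r : S → ℝ) (s₀ : S) :
    ∑ f : Fin n → S,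
        (∏ k : Fin n,
            ((1 - γ * (1 - α k.val)) •
                ((1 - (γ * (1 - α k.val)) • P k.val)⁻¹ * P k.val))
              ((Fin.cons s₀ f : Fin (n + 1) → S) k.castSucc) (f k)) *
          ((1 - γ)⁻¹ *
            ∑ k : Fin n,
              (((1 - γ) / (1 - γ * (1 - α k.val))) *
                  ∏ i ∈ Finset.range k.val,
                    (γ - γ * (1 - α i)) / (1 - γ * (1 - α i))) * r (f k))
      = (1 - γ)⁻¹ * (gspNMat γ α P n 0).mulVec r s₀ :=
  stmt_14_general n hn P (fun k hk => (hP k hk).mulVec_one) γ α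
    (fun k hk => (hP k hk).isUnit_one_sub_smul
      (abs_mul_one_sub_lt_one (abs_lt.2 ⟨by linarith [hγ.1], hγ.2⟩) (hα k hk))) hαn r s₀
end

section
/- (Lemma 3: mixture vector fields and the continuity equation.) Let d ≥ 1, let N ≥ 1, let λ_1, …, λ_N ∈ [0,1] with ∑_i λ_i = 1, and for each i let p_i : ℝ × ℝ^d → ℝ and v_i : ℝ × ℝ^d → ℝ^d. Assume that for every i, t, and x: the map t ↦ p_i(t,x) is differentiable, the map x ↦ p_i(t,x)·v_i(t,x) is differentiable, and the continuity equation ∂_t p_i(t,x) = div_x (p_i(t,·)·v_i(t,·))(x) holds, where div_x g(x) := ∑_{j=1}^d ∂g_j/∂x_j (x) denotes the spatial divergence. Set p(t,x) := ∑_i λ_i p_i(t,x) and assume p(t,x) > 0 for all (t,x), and define v(t,x) := p(t,x)⁻¹ · ∑_i λ_i p_i(t,x) · v_i(t,x). Then the mixture pair satisfies the continuity equation: ∂_t p(t,x) = div_x (p(t,·)·v(t,·))(x) for all (t,x). -/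
/-- The spatial divergence of a map `g : ℝ^d → ℝ^d` at `x`:
`div g x = ∑_j ∂g_j/∂x_j (x)`, computed from the Fréchet derivative. -/
noncomputable def divergence {d : ℕ}
    (g : EuclideanSpace ℝ (Fin d) → EuclideanSpace ℝ (Fin d))
    (x : EuclideanSpace ℝ (Fin d)) : ℝ :=
  ∑ j : Fin d, fderiv ℝ g x (EuclideanSpace.single j 1) j

section

open Filter Topology

variable {d : ℕ} {ι : Type*} {x : EuclideanSpace ℝ (Fin d)}

theorem divergence_congr {f g : EuclideanSpace ℝ (Fin d) → EuclideanSpace ℝ (Fin d)}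
    (hfg : f =ᶠ[𝓝 x] g) : divergence f x = divergence g x := by
  simp only [divergence, hfg.fderiv_eq]

theorem divergence_const_smul (c : ℝ)
    (g : EuclideanSpace ℝ (Fin d) → EuclideanSpace ℝ (Fin d)) :
    divergence (c • g) x = c * divergence g x := by
  simp only [divergence, fderiv_const_smul_field, Pi.smul_apply, smul_apply,
    PiLp.smul_apply, smul_eq_mul, Finset.mul_sum]

theorem divergence_fun_sum {s : Finset ι}
    {g : ι → EuclideanSpace ℝ (Fin d) → EuclideanSpace ℝ (Fin d)}
    (hg : ∀ i ∈ s, DifferentiableAt ℝ (g i) x) :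
    divergence (fun y => ∑ i ∈ s, g i y) x = ∑ i ∈ s, divergence (g i) x := by
  simp only [divergence, fderiv_fun_sum hg, sum_apply, WithLp.ofLp_sum, Finset.sum_apply]
  exact Finset.sum_comm

-- The continuity equation is linear in the pair (density `ρ`, flux `J`), though not in the
-- pair (density, velocity field).
theorem deriv_sum_mul_eq_divergence_sum_smul {s : Finset ι} {t : ℝ} (w : ι → ℝ)
    {ρ : ι → ℝ → ℝ} {J : ι → EuclideanSpace ℝ (Fin d) → EuclideanSpace ℝ (Fin d)}
    (hρ : ∀ i ∈ s, DifferentiableAt ℝ (ρ i) t)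
    (hJ : ∀ i ∈ s, DifferentiableAt ℝ (J i) x)
    (hcont : ∀ i ∈ s, deriv (ρ i) t = divergence (J i) x) :
    deriv (fun τ => ∑ i ∈ s, w i * ρ i τ) t
      = divergence (fun y => ∑ i ∈ s, w i • J i y) x :=
  calc
    deriv (fun τ => ∑ i ∈ s, w i * ρ i τ) t
      = ∑ i ∈ s, deriv (fun τ => w i * ρ i τ) t :=
        deriv_fun_sum fun i hi => (hρ i hi).const_mul (w i)
    _ = ∑ i ∈ s, divergence (w i • J i) x :=
        Finset.sum_congr rfl fun i hi => by
          rw [deriv_const_mul _ (hρ i hi), hcont i hi, divergence_const_smul]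
    _ = divergence (fun y => ∑ i ∈ s, w i • J i y) x :=
        (divergence_fun_sum fun i hi => (hJ i hi).const_smul (w i)).symm

theorem stmt_15_general {s : Finset ι} {t : ℝ} (w : ι → ℝ)
    {p : ι → ℝ → EuclideanSpace ℝ (Fin d) → ℝ}
    {v : ι → ℝ → EuclideanSpace ℝ (Fin d) → EuclideanSpace ℝ (Fin d)}
    (hp : ∀ i ∈ s, DifferentiableAt ℝ (fun τ => p i τ x) t)
    (hpv : ∀ i ∈ s, DifferentiableAt ℝ (fun y => p i t y • v i t y) x)
    (hcont : ∀ i ∈ s,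
      deriv (fun τ => p i τ x) t = divergence (fun y => p i t y • v i t y) x)
    (hne : ∀ᶠ y in 𝓝 x, ∑ i ∈ s, w i * p i t y ≠ 0) :
    deriv (fun τ => ∑ i ∈ s, w i * p i τ x) t
      = divergence
          (fun y =>
            (∑ i ∈ s, w i * p i t y) •
              ((∑ i ∈ s, w i * p i t y)⁻¹ • ∑ i ∈ s, (w i * p i t y) • v i t y)) x := by
  rw [deriv_sum_mul_eq_divergence_sum_smul w hp hpv hcont]
  refine divergence_congr ?_
  filter_upwards [hne] with y hy
  simp only [smul_inv_smul₀ hy, mul_smul]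

end

/-- **Lemma 3: mixture vector fields satisfy the continuity equation.** If each pair
`(p_i, v_i)` satisfies the continuity equation `∂_t p_i = div_x (p_i · v_i)` (with the
stated differentiability assumptions), the mixture weights `λ_i ∈ [0,1]` sum to `1`, and
the mixture density `p = ∑_i λ_i p_i` is everywhere positive, then the mixture density
together with the density-weighted mixture vector field
`v(t,x) = p(t,x)⁻¹ • ∑_i λ_i p_i(t,x) • v_i(t,x)` also satisfies the continuity
equation. -/
theorem stmt_15 (d : ℕ) (hd : 1 ≤ d) (N : ℕ) (hN : 1 ≤ N)
    (lam : Fin N → ℝ) (hlam : ∀ i, lam i ∈ Set.Icc (0 : ℝ) 1) (hsum : ∑ i, lam i = 1)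
    (p : Fin N → ℝ → EuclideanSpace ℝ (Fin d) → ℝ)
    (v : Fin N → ℝ → EuclideanSpace ℝ (Fin d) → EuclideanSpace ℝ (Fin d))
    (hpt : ∀ i t x, DifferentiableAt ℝ (fun s => p i s x) t)
    (hpv : ∀ i t x, DifferentiableAt ℝ (fun y => p i t y • v i t y) x)
    (hcont : ∀ i t x,
      deriv (fun s => p i s x) t = divergence (fun y => p i t y • v i t y) x)
    (hpos : ∀ t x, 0 < ∑ i, lam i * p i t x) :
    ∀ t x,
      deriv (fun s => ∑ i, lam i * p i s x) t
        = divergence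
            (fun y =>
              (∑ i, lam i * p i t y) •
                ((∑ i, lam i * p i t y)⁻¹ • ∑ i, (lam i * p i t y) • v i t y)) x := by
  intro t x
  exact stmt_15_general lam (fun i _ => hpt i t x) (fun i _ => hpv i t x)
    (fun i _ => hcont i t x) (.of_forall fun y => (hpos t y).ne')
end
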